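/- Let n ≥ 2, let H be a hyperplane in ℝⁿ, and let 𝒥′ ⊂ 𝒥_H(𝒦ⁿₙ). A map ∂ ∈ 𝒥_H(𝒦ⁿₙ) is approximable on 𝒦ⁿₙ by maps in 𝒥′ (i.e., there is a single sequence (∂_k) in 𝒥′ with ‖1_{∂_k K} − 1_{∂K}‖_{L¹} → 0 for every K ∈ 𝒦ⁿₙ) if and only if it is weakly approximable on 𝒦ⁿₙ by maps in 𝒥′ (i.e., for each K ∈ 𝒦ⁿₙ there are ∂_{K,k} ∈ 𝒥′ with ‖1_{∂_{K,k} K} − 1_{∂K}‖_{L¹} → 0). -/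

import Mathlib

open MeasureTheory Metric Filter Topology
open scoped RealInnerProductSpace

noncomputable section

abbrev Euc (n : ℕ) : Type := EuclideanSpace ℝ (Fin n)

/-- `A` is essentially contained in `B` (up to a set of measure zero). -/
def essSub {n : ℕ} (A B : Set (Euc n)) : Prop := volume (A \ B) = 0

/-- `A` is essentially equal to `B` (up to a set of measure zero). -/
def essEq {n : ℕ} (A B : Set (Euc n)) : Prop := volume ((A \ B) ∪ (B \ A)) = 0

/-- The symmetric difference of two sets. -/
def sd {n : ℕ} (A B : Set (Euc n)) : Set (Euc n) := (A \ B) ∪ (B \ A)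

/-- A convex body: a compact convex set with nonempty interior. -/
def isConvexBody {n : ℕ} (A : Set (Euc n)) : Prop :=
  IsCompact A ∧ Convex ℝ A ∧ (interior A).Nonempty

/-- The infinite spherical cylinder of radius `ρ` whose axis passes through `c`
in direction `u`. -/
def cyl {n : ℕ} (u c : Euc n) (ρ : ℝ) : Set (Euc n) :=
  {y | ‖(y - c) - ⟪y - c, u⟫ • u‖ ≤ ρ}

/-- Membership in `𝒥_H(𝒦ⁿₙ)`: a map on convex bodies, with values in `𝓛ⁿ`, that is
monotonic, measure preserving, maps balls to balls, and respects `H`-cylinders,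
where `H` is a hyperplane with unit normal `u`. -/
def inJH {n : ℕ} (u : Euc n) (D : Set (Euc n) → Set (Euc n)) : Prop :=
  (∀ A : Set (Euc n), isConvexBody A → MeasurableSet (D A) ∧ volume (D A) ≠ ⊤) ∧
  (∀ A B : Set (Euc n), isConvexBody A → isConvexBody B →
      essSub A B → essSub (D A) (D B)) ∧
  (∀ A : Set (Euc n), isConvexBody A → volume (D A) = volume A) ∧
  (∀ A : Set (Euc n), isConvexBody A →
      (∃ (x : Euc n) (r : ℝ), 0 < r ∧ essEq A (closedBall x r)) →
      ∃ (x' : Euc n) (r' : ℝ), 0 < r' ∧ essEq (D A) (closedBall x' r')) ∧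
  (∀ A : Set (Euc n), isConvexBody A → ∀ (c : Euc n) (ρ : ℝ), 0 < ρ →
      essSub A (cyl u c ρ) → essSub (D A) (cyl u c ρ))

/-- `φ` is the contraction associated with `D` (with respect to the direction `u`):
`∂B(x + tu, r) = B(x + φ(t)u, r)`, essentially. -/
def assocContr {n : ℕ} (u : Euc n) (D : Set (Euc n) → Set (Euc n)) (φ : ℝ → ℝ) : Prop :=
  LipschitzWith 1 φ ∧ ∀ x : Euc n, ⟪x, u⟫ = 0 → ∀ t r : ℝ, 0 < r →
    essEq (D (closedBall (x + t • u) r)) (closedBall (x + φ t • u) r)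

/-- Convergence `∂_k → ∂` on the convex bodies, in the `L¹` sense of indicator functions. -/
def convOnK {n : ℕ} (Dk : ℕ → Set (Euc n) → Set (Euc n))
    (D : Set (Euc n) → Set (Euc n)) : Prop :=
  ∀ K : Set (Euc n), isConvexBody K →
    Tendsto (fun k => volume (sd (Dk k K) (D K))) atTop (𝓝 0)


/-- projection along `u` -/
def qq {n : ℕ} (u : Euc n) : Euc n →L[ℝ] Euc n :=
  ContinuousLinearMap.id ℝ (Euc n) - (innerSL ℝ u).smulRight u

lemma qq_apply {n : ℕ} (u y : Euc n) : qq u y = y - ⟪y, u⟫ • u := by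
  simp [qq, real_inner_comm]

lemma mem_cyl {n : ℕ} {u c y : Euc n} {ρ : ℝ} : y ∈ cyl u c ρ ↔ ‖qq u (y - c)‖ ≤ ρ := by
  rw [qq_apply]; rfl

lemma qq_u {n : ℕ} {u : Euc n} (hu : ‖u‖ = 1) : qq u u = 0 := by
  simp [qq_apply, hu]

lemma qq_add_smul {n : ℕ} {u : Euc n} (hu : ‖u‖ = 1) (y : Euc n) (s : ℝ) :
    qq u (y + s • u) = qq u y := by
  simp [qq_u hu]

lemma inner_qq {n : ℕ} {u : Euc n} (hu : ‖u‖ = 1) (y : Euc n) : ⟪qq u y, u⟫ = 0 := by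
  simp [qq_apply, inner_sub_left, inner_smul_left, hu]

lemma decomp {n : ℕ} (u : Euc n) (y : Euc n) : y = qq u y + ⟪y, u⟫ • u := by
  simp [qq_apply]

lemma norm_sq_decomp {n : ℕ} {u : Euc n} (hu : ‖u‖ = 1) (y : Euc n) :
    ‖y‖ ^ 2 = ‖qq u y‖ ^ 2 + ⟪y, u⟫ ^ 2 := by
  have h := norm_add_sq_eq_norm_sq_add_norm_sq_of_inner_eq_zero (qq u y) (⟪y, u⟫ • u)
    (by rw [inner_smul_right, inner_qq hu, mul_zero])
  rw [← decomp, norm_smul, hu] at h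
  simp only [Real.norm_eq_abs, mul_one, abs_mul_abs_self] at h
  nlinarith

lemma norm_qq_le {n : ℕ} {u : Euc n} (hu : ‖u‖ = 1) (y : Euc n) : ‖qq u y‖ ≤ ‖y‖ := by
  have := norm_sq_decomp hu y
  exact abs_le_of_sq_le_sq' (by nlinarith [sq_nonneg ⟪y, u⟫]) (norm_nonneg _) |>.2

lemma abs_inner_le {n : ℕ} {u : Euc n} (hu : ‖u‖ = 1) (y : Euc n) : |⟪y, u⟫| ≤ ‖y‖ := by
  simpa [hu] using abs_real_inner_le_norm y u

lemma qq_qq {n : ℕ} {u : Euc n} (hu : ‖u‖ = 1) (y : Euc n) : qq u (qq u y) = qq u y := by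
  rw [qq_apply u (qq u y), inner_qq hu]; simp

lemma mem_cyl_add {n : ℕ} {u : Euc n} (hu : ‖u‖ = 1) (c y : Euc n) (ρ s : ℝ) :
    y + s • u ∈ cyl u c ρ ↔ y ∈ cyl u c ρ := by
  rw [mem_cyl, mem_cyl, add_sub_right_comm, qq_add_smul hu]

lemma cyl_congr {n : ℕ} {u p p' : Euc n} (h : qq u p = qq u p') (ρ : ℝ) :
    cyl u p ρ = cyl u p' ρ := by
  ext y; rw [mem_cyl, mem_cyl, map_sub, map_sub, h]

lemma cyl_eq {n : ℕ} (u c : Euc n) (ρ : ℝ) : cyl u c ρ = (qq u) ⁻¹' closedBall (qq u c) ρ := by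
  ext y; rw [mem_cyl, map_sub, Set.mem_preimage, mem_closedBall, dist_eq_norm]

lemma isClosed_cyl {n : ℕ} (u c : Euc n) (ρ : ℝ) : IsClosed (cyl u c ρ) := by
  rw [cyl_eq]; exact isClosed_closedBall.preimage (qq u).continuous

lemma convex_cyl {n : ℕ} (u c : Euc n) (ρ : ℝ) : Convex ℝ (cyl u c ρ) := by
  rw [cyl_eq]; exact (convex_closedBall _ _).linear_preimage (qq u).toLinearMap

lemma closedBall_sub_cyl {n : ℕ} {u : Euc n} (hu : ‖u‖ = 1) (c : Euc n) (ρ : ℝ) :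
    closedBall c ρ ⊆ cyl u c ρ := by
  intro y hy
  rw [mem_cyl]
  rw [mem_closedBall, dist_eq_norm] at hy
  exact (norm_qq_le hu _).trans hy

lemma essSub_iff {n : ℕ} {A B : Set (Euc n)} : essSub A B ↔ A ≤ᵐ[volume] B := by
  rw [ae_le_set]; rfl

lemma essEq_iff {n : ℕ} {A B : Set (Euc n)} : essEq A B ↔ A =ᵐ[volume] B := by
  rw [← measure_symmDiff_eq_zero_iff]; rfl

lemma body_ball {n : ℕ} (x : Euc n) {r : ℝ} (hr : 0 < r) : isConvexBody (closedBall x r) :=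
  ⟨isCompact_closedBall x r, convex_closedBall x r,
    ⟨x, ball_subset_interior_closedBall (mem_ball_self hr)⟩⟩

lemma body_cap {n : ℕ} {u : Euc n} (hu : ‖u‖ = 1) (p : Euc n) {r δ : ℝ} (hr : 0 < r) (hδ : 0 < δ) :
    isConvexBody (closedBall p r ∩ cyl u p δ) := by
  refine ⟨(isCompact_closedBall p r).inter_right (isClosed_cyl _ _ _),
    (convex_closedBall p r).inter (convex_cyl _ _ _), p, ?_⟩
  rw [interior_inter]
  exact ⟨ball_subset_interior_closedBall (mem_ball_self hr),
    interior_mono (closedBall_sub_cyl hu p δ) (ball_subset_interior_closedBall (mem_ball_self hδ))⟩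

lemma ball_sub_of_ae {n : ℕ} {x : Euc n} {r : ℝ} (hr : 0 < r) {F : Set (Euc n)} (hF : IsClosed F)
    (h : closedBall x r ≤ᵐ[volume] F) : closedBall x r ⊆ F := by
  have h1 : ball x r ⊆ F := by
    by_contra hc
    have hne : (ball x r \ F).Nonempty := Set.sdiff_nonempty.2 hc
    have hpos := (isOpen_ball.sdiff hF).measure_pos (volume : Measure (Euc n)) hne
    have := ae_le_set.1 h
    exact hpos.ne' (measure_mono_null (Set.sdiff_subset_sdiff_left ball_subset_closedBall) this)
  rw [← closure_ball x hr.ne']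
  exact closure_minimal h1 hF

lemma ball_center {n : ℕ} {x y : Euc n} {r s : ℝ} (hr : 0 < r) (hrs : r ≤ s)
    (h : closedBall x r ⊆ closedBall y s) : ‖x - y‖ + r ≤ s := by
  by_cases hxy : x - y = 0
  · simpa [hxy] using hrs
  · have := h (show x + (r / ‖x - y‖) • (x - y) ∈ closedBall x r by
      rw [mem_closedBall, dist_eq_norm]
      have : ‖x - y‖ ≠ 0 := norm_ne_zero_iff.2 hxy
      simp [norm_smul, this, abs_of_pos hr])
    rw [mem_closedBall, dist_eq_norm] at this
    have e : x + (r / ‖x - y‖) • (x - y) - y = (1 + r / ‖x - y‖) • (x - y) := by module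
    rw [e, norm_smul, Real.norm_of_nonneg (by positivity)] at this
    have h0 : ‖x - y‖ ≠ 0 := norm_ne_zero_iff.2 hxy
    rw [add_mul, div_mul_cancel₀ _ h0] at this
    linarith

lemma exists_perp {n : ℕ} (hn : 2 ≤ n) (u : Euc n) : ∃ e : Euc n, ‖e‖ = 1 ∧ ⟪e, u⟫ = 0 := by
  have h1 := (ℝ ∙ u).finrank_add_finrank_orthogonal
  have h2 : Module.finrank ℝ (ℝ ∙ u) ≤ 1 := (finrank_span_le_card ({u} : Set (Euc n))).trans (by simp)
  rw [finrank_euclideanSpace_fin] at h1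
  have h3 : 0 < Module.finrank ℝ (ℝ ∙ u)ᗮ := by omega
  have := Module.finrank_pos_iff.1 h3
  obtain ⟨v, hv⟩ := exists_norm_eq (ℝ ∙ u)ᗮ (zero_le_one (α := ℝ))
  refine ⟨v, by simpa using hv, ?_⟩
  rw [real_inner_comm]
  exact Submodule.mem_orthogonal_singleton_iff_inner_right.1 v.2

/-- shift function -/
def isShift {n : ℕ} (u : Euc n) (D : Set (Euc n) → Set (Euc n)) (σ : ℝ → ℝ) : Prop :=
  ∀ (p : Euc n) (r : ℝ), 0 < r → D (closedBall p r) =ᵐ[volume] closedBall (p + σ ⟪p, u⟫ • u) r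

lemma shift_pre {n : ℕ} (hn : 2 ≤ n) {u : Euc n} (hu : ‖u‖ = 1)
    {D : Set (Euc n) → Set (Euc n)} (hD : inJH u D) (p : Euc n) (r : ℝ) (hr : 0 < r) :
    ∃ s : ℝ, D (closedBall p r) =ᵐ[volume] closedBall (p + s • u) r := by
  obtain ⟨-, -, hvol, hball, hcyl⟩ := hD
  have hb := body_ball p hr
  obtain ⟨x, r', hr', hx⟩ := hball _ hb ⟨p, r, hr, essEq_iff.2 (ae_eq_refl _)⟩
  rw [essEq_iff] at hx
  have : Nonempty (Fin n) := ⟨⟨0, by omega⟩⟩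
  have hv := hvol _ hb
  rw [measure_congr hx, Measure.addHaar_closedBall _ _ hr'.le, Measure.addHaar_closedBall _ _ hr.le]
    at hv
  have hb0 : (volume : Measure (Euc n)) (ball 0 1) ≠ 0 := (measure_ball_pos _ _ one_pos).ne'
  have hb1 : (volume : Measure (Euc n)) (ball 0 1) ≠ ⊤ := measure_ball_lt_top.ne
  rw [ENNReal.mul_left_inj hb0 hb1, ENNReal.ofReal_eq_ofReal_iff (by positivity) (by positivity),
    finrank_euclideanSpace_fin] at hv
  have hrr : r' = r := (pow_left_inj₀ hr'.le hr.le (by omega)).1 hv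
  subst hrr
  have hc := essSub_iff.1 (hcyl _ hb p r' hr
    (essSub_iff.2 (closedBall_sub_cyl hu p r').eventuallyLE))
  have hc' := ball_sub_of_ae hr (isClosed_cyl u p r') (hx.symm.le.trans hc)
  have hq : qq u (x - p) = 0 := by
    have h0 : ‖qq u (x - p)‖ ≤ 0 := by
      by_contra hpos
      push Not at hpos
      have h0 : ‖qq u (x - p)‖ ≠ 0 := hpos.ne'
      have := hc' (show x + (r' / ‖qq u (x - p)‖) • qq u (x - p) ∈ closedBall x r' by
        rw [mem_closedBall, dist_eq_norm]
        simp only [add_sub_cancel_left, norm_smul, norm_div, norm_norm, div_mul_cancel₀ _ h0]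
        rw [Real.norm_of_nonneg hr.le])
      rw [mem_cyl, add_sub_right_comm, map_add, map_smul, qq_qq hu] at this
      have e : qq u (x - p) + (r' / ‖qq u (x - p)‖) • qq u (x - p)
        = (1 + r' / ‖qq u (x - p)‖) • qq u (x - p) := by module
      rw [e, norm_smul, Real.norm_of_nonneg (by positivity), add_mul, div_mul_cancel₀ _ h0] at this
      linarith
    exact norm_le_zero_iff.1 h0
  refine ⟨⟪x - p, u⟫, ?_⟩
  have : x = p + ⟪x - p, u⟫ • u := by
    have := decomp u (x - p)
    rw [hq, zero_add] at this
    rw [← this]; abel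
  rw [← this]; exact hx

lemma exists_shift {n : ℕ} (hn : 2 ≤ n) {u : Euc n} (hu : ‖u‖ = 1)
    {D : Set (Euc n) → Set (Euc n)} (hD : inJH u D) : ∃ σ, isShift u D σ := by
  have hpre := shift_pre hn hu hD
  choose! g hg using hpre
  obtain ⟨e, he, heu⟩ := exists_perp hn u
  have step : ∀ (p p' : Euc n) (r : ℝ), 0 < r → ⟪p, u⟫ = ⟪p', u⟫ →
      g p r = g p' (r + ‖p - p'‖) := by
    intro p p' r hr hpp
    have hr' : 0 < r + ‖p - p'‖ := by positivity
    have hsub : closedBall p r ⊆ closedBall p' (r + ‖p - p'‖) :=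
      closedBall_subset_closedBall' (by rw [dist_eq_norm])
    have hm := essSub_iff.1 (hD.2.1 _ _ (body_ball p hr) (body_ball p' hr')
      (essSub_iff.2 hsub.eventuallyLE))
    have hm' := ball_sub_of_ae hr isClosed_closedBall
      (((hg p r hr).symm.le.trans hm).trans (hg p' _ hr').le)
    have h1 := ball_center hr (by linarith [norm_nonneg (p - p')]) hm'
    have h2 : p + g p r • u - (p' + g p' (r + ‖p - p'‖) • u)
      = (p - p') + (g p r - g p' (r + ‖p - p'‖)) • u := by module
    rw [h2] at h1
    have h3 := norm_add_sq_eq_norm_sq_add_norm_sq_of_inner_eq_zero (p - p')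
      ((g p r - g p' (r + ‖p - p'‖)) • u)
      (by rw [inner_smul_right, inner_sub_left, hpp]; simp)
    set d := g p r - g p' (r + ‖p - p'‖) with hd
    rw [norm_smul d u, hu, mul_one] at h3
    have h4 : ‖d‖ = 0 := by
      nlinarith [norm_nonneg d, norm_nonneg (p - p'), norm_nonneg (p - p' + d • u)]
    have := norm_eq_zero.1 h4
    linarith
  have step2 : ∀ (p : Euc n) (r d : ℝ), 0 < r → 0 ≤ d → g p r = g p (r + 2 * d) := by
    intro p r d hr hd
    have e1 := step p (p + d • e) r hr (by rw [inner_add_left, inner_smul_left, heu]; simp)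
    have e2 := step (p + d • e) p (r + d) (by linarith)
      (by rw [inner_add_left, inner_smul_left, heu]; simp)
    have n1 : ‖p - (p + d • e)‖ = d := by simp [norm_smul, he, abs_of_nonneg hd]
    have n2 : ‖p + d • e - p‖ = d := by simp [norm_smul, he, abs_of_nonneg hd]
    rw [n1] at e1; rw [n2] at e2
    rw [e1, e2]; congr 1; ring
  have step3 : ∀ (p : Euc n) (r : ℝ), 0 < r → g p r = g p 1 := by
    intro p r hr
    rw [step2 p r (1/2) hr (by norm_num), step2 p 1 (r/2) one_pos (by linarith)]
    congr 1; ring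
  refine ⟨fun c => g (c • u) 1, fun p r hr => ?_⟩
  have : g p r = g (⟪p, u⟫ • u) 1 := by
    rw [step p (⟪p, u⟫ • u) r hr (by rw [inner_smul_left]; simp [hu]), step3]
    positivity
  simp only [← this]
  exact hg p r hr

lemma cap_image {n : ℕ} {u : Euc n} (hu : ‖u‖ = 1)
    {D : Set (Euc n) → Set (Euc n)} (hD : inJH u D) {σ : ℝ → ℝ} (hσ : isShift u D σ)
    (p : Euc n) {r δ : ℝ} (hr : 0 < r) (hδ : 0 < δ) :
    D (closedBall p r ∩ cyl u p δ) =ᵐ[volume]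
      (closedBall (p + σ ⟪p, u⟫ • u) r ∩ cyl u p δ : Set (Euc n)) := by
  have hC := body_cap hu p hr hδ
  have h1 := essSub_iff.1 (hD.2.1 _ _ hC (body_ball p hr)
    (essSub_iff.2 Set.inter_subset_left.eventuallyLE))
  have h2 := essSub_iff.1 (hD.2.2.2.2 _ hC p δ hδ (essSub_iff.2 Set.inter_subset_right.eventuallyLE))
  have h3 := h1.trans (hσ p r hr).le
  have h4 : D (closedBall p r ∩ cyl u p δ) ≤ᵐ[volume]
      (closedBall (p + σ ⟪p, u⟫ • u) r ∩ cyl u p δ : Set (Euc n)) := by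
    filter_upwards [h2, h3] with x hx hx' hxD using ⟨hx' hxD, hx hxD⟩
  refine ae_eq_of_ae_subset_of_measure_ge h4 ?_ (hD.1 _ hC).1.nullMeasurableSet ?_
  · rw [hD.2.2.1 _ hC]
    set s := σ ⟪p, u⟫ • u with hs
    have : (closedBall (p + s) r ∩ cyl u p δ : Set (Euc n)) =
        (fun y => y + (-s)) ⁻¹' (closedBall p r ∩ cyl u p δ) := by
      ext y
      have := mem_cyl_add hu p y δ (- σ ⟪p, u⟫)
      rw [neg_smul, ← hs] at this
      simp only [Set.mem_inter_iff, Set.mem_preimage, this, mem_closedBall, dist_eq_norm]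
      rw [show y - (p + s) = y + -s - p by abel]
    rw [this, measure_preimage_add_right]
  · exact ((measure_mono Set.inter_subset_left).trans_lt measure_closedBall_lt_top).ne

lemma cap_le {n : ℕ} {u : Euc n} (hu : ‖u‖ = 1)
    {D : Set (Euc n) → Set (Euc n)} (hD : inJH u D) {σ : ℝ → ℝ} (hσ : isShift u D σ)
    {K : Set (Euc n)} (hK : isConvexBody K)
    (p : Euc n) {r δ : ℝ} (hr : 0 < r) (hδ : 0 < δ) (hC : closedBall p r ∩ cyl u p δ ⊆ K) :
    (closedBall (p + σ ⟪p, u⟫ • u) r ∩ cyl u p δ : Set (Euc n)) ≤ᵐ[volume] D K :=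
  (cap_image hu hD hσ p hr hδ).symm.le.trans (essSub_iff.1 (hD.2.1 _ _ (body_cap hu p hr hδ) hK
    (essSub_iff.2 hC.eventuallyLE)))

lemma measure_cyl_ge {n : ℕ} {u : Euc n}
    {D : Set (Euc n) → Set (Euc n)} (hD : inJH u D)
    {K : Set (Euc n)} (hK : isConvexBody K) (p : Euc n) {δ : ℝ} (hδ : 0 < δ) :
    volume (K ∩ cyl u p δ) ≤ volume (D K ∩ cyl u p δ) := by
  have hcl : IsClosed (K ∩ cyl u p δ) := hK.1.isClosed.inter (isClosed_cyl _ _ _)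
  have hconv : Convex ℝ (K ∩ cyl u p δ) := hK.2.1.inter (convex_cyl _ _ _)
  by_cases hi : (interior (K ∩ cyl u p δ)).Nonempty
  · have hb : isConvexBody (K ∩ cyl u p δ) := ⟨hK.1.inter_right (isClosed_cyl _ _ _), hconv, hi⟩
    rw [← hD.2.2.1 _ hb]
    apply measure_mono_ae
    have h1 := essSub_iff.1 (hD.2.1 _ _ hb hK (essSub_iff.2 Set.inter_subset_left.eventuallyLE))
    have h2 := essSub_iff.1 (hD.2.2.2.2 _ hb p δ hδ
      (essSub_iff.2 Set.inter_subset_right.eventuallyLE))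
    filter_upwards [h1, h2] with x h h' hx using ⟨h hx, h' hx⟩
  · have := hconv.addHaar_frontier volume
    rw [hcl.frontier_eq, Set.not_nonempty_iff_eq_empty.1 hi, Set.sdiff_empty] at this
    rw [this]; exact zero_le

/-- the hyperplane as a subspace -/
abbrev HH {n : ℕ} (u : Euc n) : Submodule ℝ (Euc n) := LinearMap.range (qq u).toLinearMap

/-- projection onto the hyperplane -/
def pp {n : ℕ} (u : Euc n) : Euc n →L[ℝ] HH u :=
  (qq u).codRestrict (HH u) (fun x => ⟨x, rfl⟩)

lemma pp_coe {n : ℕ} (u y : Euc n) : (pp u y : Euc n) = qq u y := rfl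

lemma pp_surj {n : ℕ} (u : Euc n) (x : HH u) : ∃ y, pp u y = x := by
  obtain ⟨x, y, rfl⟩ := x
  exact ⟨y, rfl⟩

lemma cyl_pp {n : ℕ} (u c : Euc n) (ρ : ℝ) : cyl u c ρ = (pp u) ⁻¹' closedBall (pp u c) ρ := by
  rw [cyl_eq]; rfl

lemma open_le {H : Type*} [NormedAddCommGroup H] [NormedSpace ℝ H] [FiniteDimensional ℝ H]
    [MeasurableSpace H] [BorelSpace H] (μ ν : Measure H) [IsFiniteMeasure ν]
    (h : ∀ x r, 0 < r → ν (closedBall x r) ≤ μ (closedBall x r)) {U : Set H} (hU : IsOpen U) :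
    ν U ≤ μ U := by
  have hf : ∀ x ∈ U, ∃ R > 0, closedBall x R ⊆ U := fun x hx =>
    nhds_basis_closedBall.mem_iff.1 (hU.mem_nhds hx)
  choose! R hR hRU using hf
  obtain ⟨t, r, htc, htU, hr, hz, hd⟩ := Besicovitch.exists_disjoint_closedBall_covering_ae ν
    (fun _ => Set.univ) U (fun x hx δ hδ => ⟨δ/2, Set.mem_univ _, by constructor <;> linarith⟩) R hR
  have hsub : (⋃ x ∈ t, closedBall x (r x)) ⊆ U := by
    refine Set.iUnion₂_subset fun x hx => ?_
    exact (closedBall_subset_closedBall (hr x hx).2.2.le).trans (hRU x (htU hx))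
  calc ν U ≤ ν (⋃ x ∈ t, closedBall x (r x)) := measure_mono_ae (ae_le_set.2 hz)
    _ ≤ ∑' x : t, ν (closedBall (x : H) (r x)) := measure_biUnion_le _ htc _
    _ ≤ ∑' x : t, μ (closedBall (x : H) (r x)) :=
        ENNReal.tsum_le_tsum fun x => h _ _ (hr x x.2).2.1
    _ = μ (⋃ x ∈ t, closedBall x (r x)) :=
        (measure_biUnion htc hd fun x _ => isClosed_closedBall.measurableSet).symm
    _ ≤ μ U := measure_mono hsub

lemma measure_cyl_eq {n : ℕ} {u : Euc n}
    {D : Set (Euc n) → Set (Euc n)} (hD : inJH u D)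
    {K : Set (Euc n)} (hK : isConvexBody K) (p : Euc n) {δ : ℝ} (hδ : 0 < δ) :
    volume (D K ∩ cyl u p δ) = volume (K ∩ cyl u p δ) := by
  have hKm : MeasurableSet K := hK.1.isClosed.measurableSet
  have hKf : volume K ≠ ⊤ := hK.1.measure_lt_top.ne
  obtain ⟨hDm, hDf⟩ := hD.1 K hK
  have hcm : MeasurableSet (cyl u p δ) := (isClosed_cyl _ _ _).measurableSet
  have hpm : Measurable (pp u) := (pp u).continuous.measurable
  let ν := (volume.restrict K).map (pp u)
  let μ := (volume.restrict (D K)).map (pp u)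
  have : IsFiniteMeasure (volume.restrict K) := ⟨by simpa using hKf.lt_top⟩
  have happ : ∀ (A : Set (Euc n)) (S : Set (HH u)), MeasurableSet S →
      (volume.restrict A).map (pp u) S = volume (A ∩ pp u ⁻¹' S) := fun A S hS => by
    rw [Measure.map_apply hpm hS, Measure.restrict_apply (hpm hS), Set.inter_comm]
  have hO : ν ((closedBall (pp u p) δ)ᶜ) ≤ μ ((closedBall (pp u p) δ)ᶜ) := by
    refine open_le μ ν (fun x r hr => ?_) isClosed_closedBall.isOpen_compl
    obtain ⟨y, rfl⟩ := pp_surj u x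
    rw [happ _ _ isClosed_closedBall.measurableSet, happ _ _ isClosed_closedBall.measurableSet,
      ← cyl_pp]
    exact measure_cyl_ge hD hK y hr
  rw [happ _ _ isClosed_closedBall.measurableSet.compl,
    happ _ _ isClosed_closedBall.measurableSet.compl, Set.preimage_compl, ← cyl_pp,
    ← Set.sdiff_eq, ← Set.sdiff_eq] at hO
  refine le_antisymm ?_ (measure_cyl_ge hD hK p hδ)
  have e1 := measure_inter_add_sdiff (μ := volume) K hcm
  have e2 := measure_inter_add_sdiff (μ := volume) (D K) hcm
  rw [hD.2.2.1 K hK, ← e1] at e2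
  have hfin : volume (D K \ cyl u p δ) ≠ ⊤ := measure_ne_top_of_subset Set.sdiff_subset hDf
  have : volume (D K ∩ cyl u p δ) + volume (D K \ cyl u p δ)
      ≤ volume (K ∩ cyl u p δ) + volume (D K \ cyl u p δ) := by rw [e2]; gcongr
  exact (ENNReal.add_le_add_iff_right hfin).1 this

lemma cyl_le {n : ℕ} {u : Euc n}
    {D : Set (Euc n) → Set (Euc n)} (hD : inJH u D) {σ : ℝ → ℝ} (hσ : isShift u D σ)
    {K : Set (Euc n)} (hK : isConvexBody K) (p : Euc n) {δ R : ℝ} (hδ : 0 < δ) (hR : 0 < R)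
    (hi : (interior (K ∩ cyl u p δ)).Nonempty) (hsub : K ∩ cyl u p δ ⊆ closedBall p R) :
    (D K ∩ cyl u p δ : Set (Euc n)) ≤ᵐ[volume] closedBall (p + σ ⟪p, u⟫ • u) R := by
  have hb : isConvexBody (K ∩ cyl u p δ) := ⟨hK.1.inter_right (isClosed_cyl _ _ _),
    hK.2.1.inter (convex_cyl _ _ _), hi⟩
  have h1 := essSub_iff.1 (hD.2.1 _ _ hb hK (essSub_iff.2 Set.inter_subset_left.eventuallyLE))
  have h2 := essSub_iff.1 (hD.2.2.2.2 _ hb p δ hδ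
    (essSub_iff.2 Set.inter_subset_right.eventuallyLE))
  have h3 : D (K ∩ cyl u p δ) ≤ᵐ[volume] (D K ∩ cyl u p δ : Set (Euc n)) := by
    filter_upwards [h1, h2] with x h h' hx using ⟨h hx, h' hx⟩
  have h4 := ae_eq_of_ae_subset_of_measure_ge h3
    (by rw [measure_cyl_eq hD hK p hδ, hD.2.2.1 _ hb]) (hD.1 _ hb).1.nullMeasurableSet
    (measure_ne_top_of_subset Set.inter_subset_left (hD.1 K hK).2)
  have h5 := essSub_iff.1 (hD.2.1 _ _ hb (body_ball p hR) (essSub_iff.2 hsub.eventuallyLE))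
  exact (h4.symm.le.trans h5).trans (hσ p R hR).le

lemma detect {n : ℕ} (hn : 2 ≤ n) {u : Euc n} (hu : ‖u‖ = 1) {m η : ℝ} (hm : 1 ≤ m) (hη : 0 < η) :
    ∃ (K : Set (Euc n)) (ε : ENNReal), isConvexBody K ∧ 0 < ε ∧
      ∀ (D D' : Set (Euc n) → Set (Euc n)) (σ σ' : ℝ → ℝ), inJH u D → inJH u D' →
        isShift u D σ → isShift u D' σ' → volume (sd (D' K) (D K)) < ε →
        ∀ c : ℝ, |c| ≤ m → |σ' c - σ c| < η := by
  obtain ⟨e, he, heu⟩ := exists_perp hn u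
  let f : Euc n →L[ℝ] ℝ := innerSL ℝ u - m • innerSL ℝ e
  have hf : ∀ y, f y = ⟪y, u⟫ - m * ⟪y, e⟫ := fun y => by simp [f, real_inner_comm]
  let K : Set (Euc n) := f ⁻¹' closedBall 0 1 ∩ (qq u) ⁻¹' closedBall 0 2
  have hmem : ∀ y, y ∈ K ↔ |⟪y, u⟫ - m * ⟪y, e⟫| ≤ 1 ∧ ‖qq u y‖ ≤ 2 := fun y => by
    simp only [K, Set.mem_inter_iff, Set.mem_preimage, mem_closedBall, dist_zero_right, hf,
      Real.norm_eq_abs]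
  have hme : ∀ y, |⟪y, e⟫| ≤ ‖qq u y‖ := fun y => by
    have : ⟪y, e⟫ = ⟪qq u y, e⟫ := by
      rw [qq_apply, inner_sub_left, inner_smul_left, real_inner_comm e u, heu]; simp
    rw [this]
    exact abs_inner_le he _
  have hnorm : ∀ y, ‖y‖ ≤ ‖qq u y‖ + |⟪y, u⟫| := fun y => by
    conv_lhs => rw [decomp u y]
    refine (norm_add_le _ _).trans ?_
    rw [norm_smul, hu, mul_one, Real.norm_eq_abs]
  have hKb : isConvexBody K := by
    refine ⟨?_, ?_, 0, ?_⟩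
    · refine Metric.isCompact_of_isClosed_isBounded
        ((isClosed_closedBall.preimage f.continuous).inter
          (isClosed_closedBall.preimage (qq u).continuous)) ?_
      refine (isBounded_closedBall (x := (0 : Euc n)) (r := 3 + 2 * m)).subset fun y hy => ?_
      rw [hmem] at hy
      rw [mem_closedBall, dist_zero_right]
      have h1 := hme y
      have h2 : |⟪y, u⟫| ≤ 1 + m * 2 := by
        have : |⟪y, u⟫| ≤ |⟪y, u⟫ - m * ⟪y, e⟫| + |m * ⟪y, e⟫| := by
          have := abs_add_le (⟪y, u⟫ - m * ⟪y, e⟫) (m * ⟪y, e⟫)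
          simpa using this
        rw [abs_mul, abs_of_pos (by linarith : 0 < m)] at this
        nlinarith [hy.1, hy.2]
      linarith [hnorm y, hy.2]
    · exact ((convex_closedBall _ _).linear_preimage f.toLinearMap).inter
        ((convex_closedBall _ _).linear_preimage (qq u).toLinearMap)
    · have hop : IsOpen (f ⁻¹' ball 0 1 ∩ (qq u) ⁻¹' ball 0 2) :=
        (isOpen_ball.preimage f.continuous).inter (isOpen_ball.preimage (qq u).continuous)
      exact interior_maximal (Set.inter_subset_inter (Set.preimage_mono ball_subset_closedBall)
        (Set.preimage_mono ball_subset_closedBall)) hop (by simp)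
  -- parameters
  obtain ⟨δ, hδ, hδ1⟩ : ∃ δ : ℝ, 0 < δ ∧ (2 * m + 1) * δ < min η 1 :=
    ⟨min η 1 / (2 * (2 * m + 1)), by positivity, by
      have : 0 < min η 1 := by positivity
      rw [mul_div_assoc', div_lt_iff₀ (by positivity)]
      nlinarith⟩
  have hδη : (2 * m + 1) * δ < η := hδ1.trans_le (min_le_left _ _)
  have hδ2 : (2 * m + 1) * δ < 1 := hδ1.trans_le (min_le_right _ _)
  have hr : 0 < 1 - m * δ := by nlinarith
  have hR : 0 < 1 + m * δ + δ := by nlinarith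
  obtain ⟨τ, hτ, hτδ, hτr, hτη⟩ : ∃ τ : ℝ, 0 < τ ∧ τ ≤ δ ∧ τ ≤ 1 - m * δ ∧
      2 * τ < η - (2 * m + 1) * δ := by
    refine ⟨min δ (min (1 - m * δ) ((η - (2 * m + 1) * δ) / 4)), ?_, min_le_left _ _, ?_, ?_⟩
    · exact lt_min hδ (lt_min hr (by linarith))
    · exact (min_le_right _ _).trans (min_le_left _ _)
    · have : min δ (min (1 - m * δ) ((η - (2 * m + 1) * δ) / 4)) ≤ (η - (2 * m + 1) * δ) / 4 :=
        (min_le_right _ _).trans (min_le_right _ _)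
      linarith
  refine ⟨K, volume (closedBall (0 : Euc n) τ), hKb, measure_closedBall_pos _ _ hτ, ?_⟩
  intro D D' σ σ' hD hD' hσ hσ' hlt c hc
  by_contra hcon
  push Not at hcon
  have hm0 : m ≠ 0 := by linarith
  let p : Euc n := (c / m) • e + c • u
  have hpu : ⟪p, u⟫ = c := by
    simp [p, inner_add_left, inner_smul_left, heu, hu]
  have hpe : m * ⟪p, e⟫ = c := by
    have : ⟪u, e⟫ = 0 := by rw [real_inner_comm, heu]
    simp [p, inner_add_left, inner_smul_left, this, he]
    field_simp
  have hqp : ‖qq u p‖ ≤ 1 := by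
    rw [show qq u p = (c / m) • e by simp [p, qq_apply, inner_add_left, inner_smul_left, heu, hu],
      norm_smul, he, mul_one, Real.norm_eq_abs, abs_div, abs_of_pos (by linarith : 0 < m),
      div_le_one (by linarith)]
    exact hc
  have hdiff : ∀ y, ⟪y, u⟫ - m * ⟪y, e⟫ = ⟪y - p, u⟫ - m * ⟪y - p, e⟫ := fun y => by
    rw [inner_sub_left, inner_sub_left, hpu, mul_sub, hpe]; ring
  have hcapK : closedBall p (1 - m * δ) ∩ cyl u p δ ⊆ K := by
    rintro y ⟨hy1, hy2⟩
    rw [mem_closedBall, dist_eq_norm] at hy1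
    rw [mem_cyl] at hy2
    rw [hmem, hdiff]
    constructor
    · have a1 := abs_inner_le hu (y - p)
      have a2 := hme (y - p)
      have a3 := abs_sub (⟪y - p, u⟫) (m * ⟪y - p, e⟫)
      rw [abs_mul, abs_of_pos (by linarith : 0 < m)] at a3
      nlinarith
    · have : qq u y = qq u (y - p) + qq u p := by rw [map_sub]; abel
      rw [this]
      refine (norm_add_le _ _).trans ?_
      nlinarith
  have hKball : K ∩ cyl u p δ ⊆ closedBall p (1 + m * δ + δ) := by
    rintro y ⟨hy1, hy2⟩
    rw [mem_cyl] at hy2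
    rw [hmem, hdiff] at hy1
    rw [mem_closedBall, dist_eq_norm]
    have a2 := hme (y - p)
    have a3 := abs_add_le (⟪y - p, u⟫ - m * ⟪y - p, e⟫) (m * ⟪y - p, e⟫)
    rw [abs_mul, abs_of_pos (by linarith : 0 < m), sub_add_cancel] at a3
    have := hnorm (y - p)
    nlinarith [hy1.1]
  have hint : (interior (K ∩ cyl u p δ)).Nonempty :=
    (body_cap hu p hr hδ).2.2.mono (interior_mono (Set.subset_inter hcapK Set.inter_subset_right))
  have A := cap_le hu hD' hσ' hKb p hr hδ hcapK
  have B := cyl_le hD hσ hKb p hδ hR hint hKball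
  rw [hpu] at A B
  -- sign
  obtain ⟨s, hs, hsσ⟩ : ∃ s : ℝ, |s| = 1 ∧ s * (σ' c - σ c) = |σ' c - σ c| := by
    rcases le_total 0 (σ' c - σ c) with h | h
    · exact ⟨1, by simp, by rw [abs_of_nonneg h, one_mul]⟩
    · exact ⟨-1, by simp, by rw [abs_of_nonpos h]; ring⟩
  have hss : s * s = 1 := by rw [← abs_mul_abs_self, hs, one_mul]
  let z : Euc n := p + (σ' c + s * (1 - m * δ - τ)) • u
  have hz1 : closedBall z τ ⊆ closedBall (p + σ' c • u) (1 - m * δ) := by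
    apply closedBall_subset_closedBall'
    rw [dist_eq_norm, show z - (p + σ' c • u) = (s * (1 - m * δ - τ)) • u by simp only [z]; module,
      norm_smul, hu, norm_mul, Real.norm_eq_abs, hs, Real.norm_of_nonneg (by linarith)]
    linarith
  have hz2 : closedBall z τ ⊆ cyl u p δ := by
    rw [cyl_congr (p' := z) (qq_add_smul hu p _).symm]
    exact (closedBall_subset_closedBall hτδ).trans (closedBall_sub_cyl hu z δ)
  have hz3 : ∀ y ∈ closedBall z τ, y ∉ closedBall (p + σ c • u) (1 + m * δ + δ) := by
    intro y hy hy'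
    have h1 : dist z (p + σ c • u) ≤ τ + (1 + m * δ + δ) :=
      (dist_triangle_left z _ y).trans (add_le_add hy hy')
    rw [dist_eq_norm, show z - (p + σ c • u) = (σ' c - σ c + s * (1 - m * δ - τ)) • u by
      simp only [z]; module, norm_smul, hu, mul_one, Real.norm_eq_abs] at h1
    have h2 : s * (σ' c - σ c + s * (1 - m * δ - τ)) ≤ |σ' c - σ c + s * (1 - m * δ - τ)| := by
      refine (le_abs_self _).trans ?_
      rw [abs_mul, hs, one_mul]
    have h3 : s * (σ' c - σ c + s * (1 - m * δ - τ)) = |σ' c - σ c| + (1 - m * δ - τ) := by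
      rw [mul_add, hsσ, ← mul_assoc, hss, one_mul]
    nlinarith
  have : closedBall z τ ≤ᵐ[volume] sd (D' K) (D K) := by
    filter_upwards [A, B] with y hA hB hy
    exact Or.inl ⟨hA ⟨hz1 hy, hz2 hy⟩, fun hD => hz3 y hy (hB ⟨hD, hz2 hy⟩)⟩
  have := measure_mono_ae this
  rw [Measure.addHaar_closedBall_center] at this
  exact absurd hlt (not_lt.2 this)

lemma loc {n : ℕ} {u : Euc n} (hu : ‖u‖ = 1) {K : Set (Euc n)} (hK : isConvexBody K)
    {y : Euc n} (hy : y ∈ interior K) {l : ℝ} (hl : 1 < l) :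
    ∃ (p : Euc n) (r δ₁ : ℝ), 0 < r ∧ 0 < δ₁ ∧ qq u p = qq u y ∧ ∀ δ, 0 < δ → δ ≤ δ₁ →
      closedBall p r ∩ cyl u p δ ⊆ K ∧ volume (K ∩ cyl u p δ) ≤
        ENNReal.ofReal ((l ^ 3) ^ n) * volume (closedBall p r ∩ cyl u p δ) := by
  obtain ⟨hKc, hKconv, -⟩ := hK
  have hl0 : 0 < l := by linarith
  set x := qq u y with hx
  have hxu : ⟪x, u⟫ = 0 := inner_qq hu y
  have hxt : ∀ t : ℝ, ⟪x + t • u, u⟫ = t := fun t => by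
    rw [inner_add_left, hxu, inner_smul_left]; simp [hu]
  have hyx : y = x + ⟪y, u⟫ • u := decomp u y
  set t₀ := ⟪y, u⟫ with ht₀
  let g : ℝ → Euc n := fun t => x + t • u
  have hg : Continuous g := by fun_prop
  have hT : IsCompact (g ⁻¹' K) := by
    have h1 : IsCompact ((fun w : Euc n => ⟪w, u⟫) '' K) := hKc.image (by fun_prop)
    refine h1.of_isClosed_subset (hKc.isClosed.preimage hg) fun t ht => ⟨_, ht, hxt t⟩
  have hgt₀ : g t₀ = y := hyx.symm
  have hT0 : (g ⁻¹' K).Nonempty := ⟨t₀, by rw [Set.mem_preimage, hgt₀]; exact interior_subset hy⟩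
  obtain ⟨b, hbK, hb⟩ := hT.exists_isGreatest hT0
  obtain ⟨a, haK, ha⟩ := hT.exists_isLeast hT0
  have hnhds : ∀ᶠ t in 𝓝 t₀, g t ∈ K := hg.continuousAt.eventually
    (by rw [hgt₀]; exact mem_interior_iff_mem_nhds.1 hy)
  obtain ⟨ε, hε, hεK⟩ := Metric.eventually_nhds_iff.1 hnhds
  have htb : t₀ < b := by
    have : t₀ + ε / 2 ≤ b := hb (hεK (by simp [abs_of_pos hε]; linarith))
    linarith
  have hta : a < t₀ := by
    have : a ≤ t₀ - ε / 2 := ha (hεK (by simp [dist_eq_norm, abs_of_pos hε]; linarith))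
    linarith
  have hinn : ∀ t, a < t → t < b → g t ∈ interior K := by
    intro t h1 h2
    have hcombo : ∀ e, g e ∈ K → ∀ α β : ℝ, 0 < α → 0 ≤ β → α + β = 1 → t = α * t₀ + β * e →
        g t ∈ interior K := by
      intro e he α β hα hβ hab ht
      have := hKconv.combo_interior_self_mem_interior hy he hα hβ hab
      rw [← hgt₀] at this
      convert this using 1
      simp only [g, ht]
      have : x = (α + β) • x := by rw [hab, one_smul]
      conv_lhs => rw [this]
      module
    rcases le_total t₀ t with h | h
    · refine hcombo b hbK ((b - t) / (b - t₀)) ((t - t₀) / (b - t₀)) (div_pos (by linarith)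
        (by linarith)) (div_nonneg (by linarith) (by linarith)) ?_ ?_
      · have : b - t₀ ≠ 0 := by linarith
        field_simp; ring
      · have : b - t₀ ≠ 0 := by linarith
        field_simp; ring
    · refine hcombo a haK ((t - a) / (t₀ - a)) ((t₀ - t) / (t₀ - a)) (div_pos (by linarith)
        (by linarith)) (div_nonneg (by linarith) (by linarith)) ?_ ?_
      · have : t₀ - a ≠ 0 := by linarith
        field_simp; ring
      · have : t₀ - a ≠ 0 := by linarith
        field_simp; ring
  obtain ⟨c, ρ, hac, hbc⟩ : ∃ c ρ : ℝ, a = c - ρ ∧ b = c + ρ :=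
    ⟨(a + b) / 2, (b - a) / 2, by ring, by ring⟩
  have hρ : 0 < ρ := by linarith
  have hρl : ρ / l < ρ := div_lt_self hρ hl
  set p := g c with hp
  have hpu : ⟪p, u⟫ = c := hxt c
  have hqp : qq u p = x := by
    simp only [hp, g]; rw [qq_add_smul hu, hx, qq_qq hu]
  -- inner radius
  obtain ⟨δa, hδa, hδaK⟩ := (isCompact_Icc (a := c - ρ / l) (b := c + ρ / l)).image hg
    |>.exists_cthickening_subset_open (isOpen_interior (s := K)) (by
      rintro _ ⟨t, ⟨h1, h2⟩, rfl⟩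
      exact hinn t (by linarith) (by linarith))
  have hwx : ∀ w, w = x + qq u (w - p) + ⟪w, u⟫ • u := fun w => by
    rw [map_sub, hqp]
    conv_lhs => rw [decomp u w]
    abel
  have hin : ∀ w, ‖qq u (w - p)‖ ≤ δa → |⟪w - p, u⟫| ≤ ρ / l → w ∈ K := by
    intro w h1 h2
    apply interior_subset
    apply hδaK
    refine mem_cthickening_of_dist_le w (g ⟪w, u⟫) δa _ ⟨_, ?_, rfl⟩ ?_
    · rw [inner_sub_left, hpu] at h2
      have := abs_le.1 h2
      constructor <;> linarith
    · rw [dist_eq_norm]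
      have : w - g ⟪w, u⟫ = qq u (w - p) := by
        conv_lhs => rw [hwx w]
        have h3 : ⟪x + qq u (w - p) + ⟪w, u⟫ • u, u⟫ = ⟪w, u⟫ := by rw [← hwx]
        rw [h3]; simp only [g]; abel
      rw [this]; exact h1
  -- outer radius
  obtain ⟨δb, hδb, hout⟩ : ∃ δb > 0, ∀ w ∈ K, ‖qq u (w - p)‖ ≤ δb → |⟪w - p, u⟫| ≤ l * ρ := by
    have hcl : IsClosed {w : Euc n | l * ρ ≤ |⟪w - p, u⟫|} :=
      isClosed_le continuous_const (by fun_prop)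
    have hco : IsCompact (qq u '' (K ∩ {w : Euc n | l * ρ ≤ |⟪w - p, u⟫|})) :=
      (hKc.inter_right hcl).image (qq u).continuous
    have hnot : x ∉ qq u '' (K ∩ {w : Euc n | l * ρ ≤ |⟪w - p, u⟫|}) := by
      rintro ⟨w, ⟨hwK, hw⟩, hwq⟩
      have h1 : g ⟪w, u⟫ = w := by
        simp only [g]; rw [← hwq]; exact (decomp u w).symm
      have h2 : ⟪w, u⟫ ∈ g ⁻¹' K := by rw [Set.mem_preimage, h1]; exact hwK
      have h3 := hb h2
      have h4 := ha h2
      simp only [Set.mem_ofPred_eq] at hw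
      rw [inner_sub_left, hpu] at hw
      have : |⟪w, u⟫ - c| ≤ ρ := abs_le.2 ⟨by linarith, by linarith⟩
      nlinarith
    obtain ⟨δb, hδb, hsub⟩ := nhds_basis_closedBall.mem_iff.1 (hco.isClosed.isOpen_compl.mem_nhds hnot)
    refine ⟨δb, hδb, fun w hwK hw => ?_⟩
    by_contra hcon
    push Not at hcon
    have : qq u w ∈ closedBall x δb := by
      rw [mem_closedBall, dist_eq_norm, ← hqp, ← map_sub]; exact hw
    exact hsub this ⟨w, ⟨hwK, hcon.le⟩, rfl⟩
  have hlt : (ρ / l ^ 2) ^ 2 < (ρ / l) ^ 2 := by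
    have : ρ / l ^ 2 < ρ / l := by
      apply div_lt_div_of_pos_left hρ hl0; nlinarith
    have h0 : 0 < ρ / l ^ 2 := by positivity
    nlinarith
  let δc := Real.sqrt ((ρ / l) ^ 2 - (ρ / l ^ 2) ^ 2)
  have hδc : 0 < δc := Real.sqrt_pos.2 (by linarith)
  have hδc2 : δc ^ 2 = (ρ / l) ^ 2 - (ρ / l ^ 2) ^ 2 := Real.sq_sqrt (by linarith)
  refine ⟨p, ρ / l, min δa (min δb δc), by positivity, by positivity, hqp, ?_⟩
  intro δ hδ hδle
  have hda : δ ≤ δa := hδle.trans (min_le_left _ _)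
  have hdb : δ ≤ δb := hδle.trans ((min_le_right _ _).trans (min_le_left _ _))
  have hdc : δ ≤ δc := hδle.trans ((min_le_right _ _).trans (min_le_right _ _))
  constructor
  · rintro w ⟨h1, h2⟩
    rw [mem_cyl] at h2
    rw [mem_closedBall, dist_eq_norm] at h1
    exact hin w (h2.trans hda) ((abs_inner_le hu _).trans h1)
  · have hsub : K ∩ cyl u p δ ⊆ AffineMap.homothety p (l ^ 3) '' (closedBall p (ρ / l) ∩ cyl u p δ) := by
      rintro w ⟨hwK, hw⟩
      rw [mem_cyl] at hw
      have hw2 := hout w hwK (hw.trans hdb)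
      have hl3 : l ^ 3 ≠ 0 := by positivity
      have hl1 : (l ^ 3)⁻¹ ≤ 1 := inv_le_one_of_one_le₀ (one_le_pow₀ hl.le)
      have hl2 : 0 < (l ^ 3)⁻¹ := by positivity
      refine ⟨p + (l ^ 3)⁻¹ • (w - p), ⟨?_, ?_⟩, ?_⟩
      · rw [mem_closedBall, dist_eq_norm, add_sub_cancel_left]
        have h1 := norm_sq_decomp hu ((l ^ 3)⁻¹ • (w - p))
        rw [map_smul, inner_smul_left, norm_smul _ (qq u (w - p)), Real.norm_of_nonneg hl2.le] at h1
        have h2 : (l ^ 3)⁻¹ * ‖qq u (w - p)‖ ≤ δ := by nlinarith [norm_nonneg (qq u (w - p))]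
        have h3 : ((l ^ 3)⁻¹ * ⟪w - p, u⟫) ^ 2 ≤ (ρ / l ^ 2) ^ 2 := by
          apply sq_le_sq'
          · have := (abs_le.1 hw2).1
            have e : -(ρ / l ^ 2) = (l ^ 3)⁻¹ * (-(l * ρ)) := by field_simp
            rw [e]; exact mul_le_mul_of_nonneg_left this hl2.le
          · have := (abs_le.1 hw2).2
            have e : (ρ / l ^ 2) = (l ^ 3)⁻¹ * (l * ρ) := by field_simp
            rw [e]; exact mul_le_mul_of_nonneg_left this hl2.le
        have h4 : ((l ^ 3)⁻¹ * ‖qq u (w - p)‖) ^ 2 ≤ δc ^ 2 := by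
          apply pow_le_pow_left₀ (by positivity) (h2.trans hdc)
        have h5 : ‖(l ^ 3)⁻¹ • (w - p)‖ ^ 2 ≤ (ρ / l) ^ 2 := by
          rw [h1]
          simp only [conj_trivial]
          linarith
        exact (abs_le_of_sq_le_sq' h5 (by positivity)).2
      · rw [mem_cyl, add_sub_cancel_left, map_smul, norm_smul, Real.norm_of_nonneg hl2.le]
        nlinarith [norm_nonneg (qq u (w - p))]
      · rw [AffineMap.homothety_apply]
        simp [smul_smul, hl3]
    refine (measure_mono hsub).trans ?_
    rw [Measure.addHaar_image_homothety, finrank_euclideanSpace_fin, abs_of_pos (by positivity)]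

lemma vitali {n : ℕ} {u : Euc n} (hu : ‖u‖ = 1) {K : Set (Euc n)} (hK : isConvexBody K)
    {ε : ENNReal} (hε : ε ≠ 0) :
    ∃ (ι : Type) (s : Finset ι) (P : ι → Euc n) (r δ : ι → ℝ),
      (∀ i, 0 < r i ∧ 0 < δ i ∧ closedBall (P i) (r i) ∩ cyl u (P i) (δ i) ⊆ K) ∧
      Pairwise (fun i j => Disjoint (cyl u (P i) (δ i)) (cyl u (P j) (δ j))) ∧
      volume K ≤ ∑ i ∈ s, volume (closedBall (P i) (r i) ∩ cyl u (P i) (δ i)) + ε := by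
  have hKf : volume K ≠ ⊤ := hK.1.measure_lt_top.ne
  have hε2 : 0 < ε / 2 := ENNReal.half_pos hε
  obtain ⟨l, hl, hlK⟩ : ∃ l : ℝ, 1 < l ∧ ENNReal.ofReal ((l ^ 3) ^ n - 1) * volume K < ε / 2 := by
    have h1 : Tendsto (fun l : ℝ => ENNReal.ofReal ((l ^ 3) ^ n - 1) * volume K) (𝓝 1)
        (𝓝 (ENNReal.ofReal (((1:ℝ) ^ 3) ^ n - 1) * volume K)) := by
      refine ENNReal.Tendsto.mul_const ?_ (Or.inr hKf)
      apply ENNReal.tendsto_ofReal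
      have : Continuous (fun l : ℝ => (l ^ 3) ^ n - 1) := by fun_prop
      exact this.tendsto 1
    simp only [one_pow, sub_self, ENNReal.ofReal_zero, zero_mul] at h1
    have h2 := (h1.mono_left (nhdsWithin_le_nhds (s := Set.Ioi 1))).eventually (gt_mem_nhds hε2)
    obtain ⟨l, h3, h4⟩ := (h2.and self_mem_nhdsWithin).exists
    exact ⟨l, h4, h3⟩
  have hloc := fun (y : Euc n) (hy : y ∈ interior K) => loc hu hK hy hl
  have hloc' : ∀ x ∈ pp u '' interior K, ∃ (p : Euc n) (r δ₁ : ℝ), 0 < r ∧ 0 < δ₁ ∧ pp u p = x ∧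
      ∀ δ, 0 < δ → δ ≤ δ₁ →
      closedBall p r ∩ cyl u p δ ⊆ K ∧ volume (K ∩ cyl u p δ) ≤
        ENNReal.ofReal ((l ^ 3) ^ n) * volume (closedBall p r ∩ cyl u p δ) := by
    rintro _ ⟨y, hy, rfl⟩
    obtain ⟨p, r, d, h1, h2, h3, h4⟩ := hloc y hy
    exact ⟨p, r, d, h1, h2, Subtype.ext h3, h4⟩
  choose! P r d hr hd hP hcap using hloc'
  have hpm : Measurable (pp u) := (pp u).continuous.measurable
  have : IsFiniteMeasure (volume.restrict K) := ⟨by simpa using hKf.lt_top⟩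
  obtain ⟨t, δ, htc, hts, hδ, hz, hdis⟩ := Besicovitch.exists_disjoint_closedBall_covering_ae
    ((volume.restrict K).map (pp u)) (fun _ => Set.univ) (pp u '' interior K)
    (fun x hx δ hδ => ⟨δ/2, Set.mem_univ _, by constructor <;> linarith⟩) d hd
  have hcyl : ∀ x ∈ t, cyl u (P x) (δ x) = pp u ⁻¹' closedBall x (δ x) := fun x hx => by
    rw [cyl_pp, hP x (hts hx)]
  have hcap' : ∀ x ∈ t, closedBall (P x) (r x) ∩ cyl u (P x) (δ x) ⊆ K ∧
      volume (K ∩ cyl u (P x) (δ x)) ≤ ENNReal.ofReal ((l ^ 3) ^ n) *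
        volume (closedBall (P x) (r x) ∩ cyl u (P x) (δ x)) := fun x hx =>
    hcap x (hts hx) _ (hδ x hx).2.1 (hδ x hx).2.2.le
  have hz' : volume (pp u ⁻¹' (pp u '' interior K \ ⋃ x ∈ t, closedBall x (δ x)) ∩ K) = 0 := by
    refine le_antisymm ?_ zero_le
    rw [← hz]
    exact (Measure.le_restrict_apply _ _).trans (Measure.le_map_apply hpm.aemeasurable _)
  have hdisc : Pairwise (fun i j : t => Disjoint (cyl u (P i) (δ i)) (cyl u (P j) (δ j))) := by
    intro i j hij
    rw [hcyl i i.2, hcyl j j.2]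
    exact (hdis i.2 j.2 (fun h => hij (Subtype.ext h))).preimage _
  have hKint : volume K = volume (interior K) := by
    refine le_antisymm ?_ (measure_mono interior_subset)
    apply measure_mono_ae
    rw [ae_le_set]
    have := hK.2.1.addHaar_frontier volume
    rwa [hK.1.isClosed.frontier_eq] at this
  have := htc.to_subtype
  set S := ∑' i : t, volume (closedBall (P i) (r i) ∩ cyl u (P i) (δ i)) with hS
  have h1 : volume K ≤ ENNReal.ofReal ((l ^ 3) ^ n) * S := by
    rw [hKint]
    calc volume (interior K) ≤ volume ((pp u ⁻¹' (pp u '' interior K \ ⋃ x ∈ t, closedBall x (δ x))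
          ∩ K) ∪ ⋃ i : t, K ∩ cyl u (P i) (δ i)) := by
          refine measure_mono fun w hw => ?_
          by_cases h : pp u w ∈ ⋃ x ∈ t, closedBall x (δ x)
          · right
            simp only [Set.mem_iUnion] at h ⊢
            obtain ⟨x, hx, hxw⟩ := h
            refine ⟨⟨x, hx⟩, interior_subset hw, ?_⟩
            rw [hcyl x hx]; exact hxw
          · left; exact ⟨⟨⟨w, hw, rfl⟩, h⟩, interior_subset hw⟩
      _ ≤ 0 + ∑' i : t, volume (K ∩ cyl u (P i) (δ i)) := by
          refine (measure_union_le _ _).trans (add_le_add hz'.le (measure_iUnion_le _))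
      _ ≤ ENNReal.ofReal ((l ^ 3) ^ n) * S := by
          rw [zero_add, hS, ← ENNReal.tsum_mul_left]
          exact ENNReal.tsum_le_tsum fun i => (hcap' i i.2).2
  have hSK : S ≤ volume K := by
    rw [hS, ← measure_iUnion]
    · exact measure_mono (Set.iUnion_subset fun i => (hcap' i i.2).1)
    · intro i j hij
      exact (hdisc hij).mono Set.inter_subset_right Set.inter_subset_right
    · intro i
      exact (isClosed_closedBall.inter (isClosed_cyl _ _ _)).measurableSet
  have h2 : volume K ≤ S + ε / 2 := by
    have e : ENNReal.ofReal ((l ^ 3) ^ n) = 1 + ENNReal.ofReal ((l ^ 3) ^ n - 1) := by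
      have : 1 ≤ (l ^ 3) ^ n := one_le_pow₀ (one_le_pow₀ hl.le)
      rw [← ENNReal.ofReal_one, ← ENNReal.ofReal_add zero_le_one (by linarith)]
      congr 1; ring
    rw [e, add_mul, one_mul] at h1
    refine h1.trans ?_
    gcongr
    exact (mul_le_mul_right hSK _).trans hlK.le
  have hSf : S ≠ ⊤ := ne_top_of_le_ne_top hKf hSK
  have h3 : ∃ s : Finset t,
      S < ∑ i ∈ s, volume (closedBall (P i) (r i) ∩ cyl u (P i) (δ i)) + ε / 2 := by
    have h4 : Tendsto (fun s : Finset t =>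
        ∑ i ∈ s, volume (closedBall (P i) (r i) ∩ cyl u (P i) (δ i)) + ε / 2) atTop
        (𝓝 (S + ε / 2)) := by
      have := (ENNReal.summable (f := fun i : t =>
        volume (closedBall (P i) (r i) ∩ cyl u (P i) (δ i)))).hasSum
      exact Tendsto.add this tendsto_const_nhds
    exact (h4.eventually (lt_mem_nhds (ENNReal.lt_add_right hSf hε2.ne'))).exists
  obtain ⟨s, hs⟩ := h3
  refine ⟨t, s, fun i => P i, fun i => r i, fun i => δ i, fun i =>
    ⟨hr _ (hts i.2), (hδ i i.2).2.1, (hcap' i i.2).1⟩, hdisc, ?_⟩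
  calc volume K ≤ S + ε / 2 := h2
    _ ≤ (∑ i ∈ s, volume (closedBall (P i) (r i) ∩ cyl u (P i) (δ i)) + ε / 2) + ε / 2 := by
        gcongr
    _ = _ := by rw [add_assoc, ENNReal.add_halves]

/-- Volume of a shell of inner radius `r` and thickness `τ`. -/
def shell (n : ℕ) (r τ : ℝ) : ENNReal :=
  ENNReal.ofReal ((r + τ) ^ n) * volume (ball (0 : Euc n) 1) -
    ENNReal.ofReal (r ^ n) * volume (ball (0 : Euc n) 1)

lemma shell_tendsto (n : ℕ) (r : ℝ) : Tendsto (fun τ => shell n r τ) (𝓝 0) (𝓝 0) := by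
  have hv : volume (ball (0 : Euc n) 1) ≠ ⊤ := measure_ball_lt_top.ne
  have h1 : Tendsto (fun τ : ℝ => ENNReal.ofReal ((r + τ) ^ n) * volume (ball (0 : Euc n) 1)) (𝓝 0)
      (𝓝 (ENNReal.ofReal ((r + 0) ^ n) * volume (ball (0 : Euc n) 1))) := by
    refine ENNReal.Tendsto.mul_const ?_ (Or.inr hv)
    apply ENNReal.tendsto_ofReal
    have : Continuous (fun τ : ℝ => (r + τ) ^ n) := by fun_prop
    exact this.tendsto 0
  have h2 := ENNReal.Tendsto.sub h1 (tendsto_const_nhds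
    (x := ENNReal.ofReal (r ^ n) * volume (ball (0 : Euc n) 1)))
    (Or.inl (ENNReal.mul_ne_top ENNReal.ofReal_ne_top hv))
  simpa [shell] using h2

lemma shell_bound {n : ℕ} (z z' : Euc n) {r τ : ℝ} (hr : 0 < r) (hz : dist z z' ≤ τ) :
    volume (closedBall z r \ closedBall z' r) ≤ shell n r τ := by
  have hτ : 0 ≤ τ := dist_nonneg.trans hz
  have h1 : closedBall z r \ closedBall z' r ⊆ closedBall z' (r + τ) \ closedBall z' r :=
    Set.sdiff_subset_sdiff_left (closedBall_subset_closedBall' (by linarith))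
  refine (measure_mono h1).trans ?_
  rw [measure_sdiff (closedBall_subset_closedBall (by linarith))
    isClosed_closedBall.measurableSet.nullMeasurableSet measure_closedBall_lt_top.ne,
    Measure.addHaar_closedBall _ _ hr.le, Measure.addHaar_closedBall _ _ (by linarith),
    finrank_euclideanSpace_fin, shell]

lemma half_bound {n : ℕ} {u : Euc n} (hu : ‖u‖ = 1) {D D' : Set (Euc n) → Set (Euc n)}
    (hD : inJH u D) (hD' : inJH u D') {σ σ' : ℝ → ℝ} (hσ : isShift u D σ) (hσ' : isShift u D' σ')
    {K : Set (Euc n)} (hK : isConvexBody K) {ε : ENNReal}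
    {ι : Type} (s : Finset ι) (P : ι → Euc n) (r δ : ι → ℝ)
    (h : ∀ i, 0 < r i ∧ 0 < δ i ∧ closedBall (P i) (r i) ∩ cyl u (P i) (δ i) ⊆ K)
    (hdis : Pairwise (fun i j => Disjoint (cyl u (P i) (δ i)) (cyl u (P j) (δ j))))
    (hvol : volume K ≤ ∑ i ∈ s, volume (closedBall (P i) (r i) ∩ cyl u (P i) (δ i)) + ε) :
    volume (D K \ D' K) ≤ ε + ∑ i ∈ s, shell n (r i) |σ ⟪P i, u⟫ - σ' ⟪P i, u⟫| := by
  let C : ι → Set (Euc n) := fun i => closedBall (P i + σ ⟪P i, u⟫ • u) (r i) ∩ cyl u (P i) (δ i)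
  let C' : ι → Set (Euc n) := fun i => closedBall (P i + σ' ⟪P i, u⟫ • u) (r i) ∩ cyl u (P i) (δ i)
  have hCm : ∀ i, MeasurableSet (C i) := fun i =>
    (isClosed_closedBall.inter (isClosed_cyl _ _ _)).measurableSet
  have hCv : ∀ i, volume (C i) = volume (closedBall (P i) (r i) ∩ cyl u (P i) (δ i)) := fun i => by
    rw [← measure_congr (cap_image hu hD hσ (P i) (h i).1 (h i).2.1)]
    exact hD.2.2.1 _ (body_cap hu _ (h i).1 (h i).2.1)
  have hCle : ∀ i, volume (C i \ D K) = 0 := fun i =>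
    ae_le_set.1 (cap_le hu hD hσ hK (P i) (h i).1 (h i).2.1 (h i).2.2)
  have hCle' : ∀ i, volume (C' i \ D' K) = 0 := fun i =>
    ae_le_set.1 (cap_le hu hD' hσ' hK (P i) (h i).1 (h i).2.1 (h i).2.2)
  set U := ⋃ i ∈ s, C i with hU
  have hUm : MeasurableSet U := Finset.measurableSet_biUnion s fun i _ => hCm i
  have hUv : volume U = ∑ i ∈ s, volume (closedBall (P i) (r i) ∩ cyl u (P i) (δ i)) := by
    rw [hU, measure_biUnion_finset _ (fun i _ => hCm i)]
    · exact Finset.sum_congr rfl fun i _ => hCv i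
    · intro i _ j _ hij
      exact (hdis hij).mono Set.inter_subset_right Set.inter_subset_right
  have hUD : volume (U \ D K) = 0 := by
    refine le_antisymm ?_ zero_le
    have : U \ D K ⊆ ⋃ i ∈ s, (C i \ D K) := by
      rintro w ⟨hw, hw'⟩
      simp only [hU, Set.mem_iUnion] at hw ⊢
      obtain ⟨i, hi, hw⟩ := hw
      exact ⟨i, hi, hw, hw'⟩
    refine (measure_mono this).trans ((measure_biUnion_finset_le _ _).trans ?_)
    simp [hCle]
  have hUf : volume U ≠ ⊤ := by
    have : volume U ≤ volume (D K) := measure_mono_ae (ae_le_set.2 hUD)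
    exact ne_top_of_le_ne_top (hD.1 K hK).2 this
  have h1 : volume (D K \ U) ≤ ε := by
    have e1 := measure_inter_add_sdiff (μ := volume) (D K) hUm
    have e2 := measure_inter_add_sdiff (μ := volume) U (hD.1 K hK).1
    rw [hUD, add_zero, Set.inter_comm] at e2
    rw [e2, hD.2.2.1 K hK] at e1
    rw [← hUv, ← e1] at hvol
    exact (ENNReal.add_le_add_iff_left hUf).1 hvol
  have hsub : D K \ D' K ⊆ (D K \ U) ∪ ⋃ i ∈ s, ((C' i \ D' K) ∪ (C i \ C' i)) := by
    rintro w ⟨hw, hw'⟩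
    by_cases hwU : w ∈ U
    · right
      simp only [hU, Set.mem_iUnion] at hwU ⊢
      obtain ⟨i, hi, hwi⟩ := hwU
      refine ⟨i, hi, ?_⟩
      by_cases h' : w ∈ C' i
      · exact Or.inl ⟨h', hw'⟩
      · exact Or.inr ⟨hwi, h'⟩
    · exact Or.inl ⟨hw, hwU⟩
  refine (measure_mono hsub).trans ((measure_union_le _ _).trans (add_le_add h1 ?_))
  refine (measure_biUnion_finset_le _ _).trans (Finset.sum_le_sum fun i _ => ?_)
  refine (measure_union_le _ _).trans ?_
  rw [hCle' i, zero_add]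
  refine le_trans (measure_mono ?_) (shell_bound (P i + σ ⟪P i, u⟫ • u) (P i + σ' ⟪P i, u⟫ • u)
    (h i).1 ?_)
  · rintro w ⟨hw, hw'⟩
    exact ⟨hw.1, fun h' => hw' ⟨h', hw.2⟩⟩
  · rw [dist_add_left, dist_eq_norm, ← sub_smul, norm_smul, hu, mul_one, Real.norm_eq_abs]

lemma conv {n : ℕ} {u : Euc n} (hu : ‖u‖ = 1) {Dk : ℕ → Set (Euc n) → Set (Euc n)}
    {D : Set (Euc n) → Set (Euc n)} (hDk : ∀ k, inJH u (Dk k)) (hD : inJH u D)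
    {σk : ℕ → ℝ → ℝ} {σ : ℝ → ℝ} (hσk : ∀ k, isShift u (Dk k) (σk k)) (hσ : isShift u D σ)
    (hlim : ∀ c, Tendsto (fun k => σk k c) atTop (𝓝 (σ c)))
    {K : Set (Euc n)} (hK : isConvexBody K) :
    Tendsto (fun k => volume (sd (Dk k K) (D K))) atTop (𝓝 0) := by
  rw [ENNReal.tendsto_nhds_zero]
  intro ε hε
  have hε2 : 0 < ε / 2 := ENNReal.half_pos hε.ne'
  have hε4 : 0 < ε / 2 / 2 := ENNReal.half_pos hε2.ne'
  obtain ⟨ι, s, P, r, δ, h, hdis, hvol⟩ := vitali hu hK hε4.ne'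
  have hsum : Tendsto (fun k => ∑ i ∈ s, shell n (r i) |σk k ⟪P i, u⟫ - σ ⟪P i, u⟫|) atTop
      (𝓝 (∑ i ∈ s, 0)) := by
    refine tendsto_finsetSum s fun i _ => (shell_tendsto n (r i)).comp ?_
    have := ((hlim ⟪P i, u⟫).sub_const (σ ⟪P i, u⟫)).abs
    simpa using this
  simp only [Finset.sum_const_zero] at hsum
  filter_upwards [ENNReal.tendsto_nhds_zero.1 hsum _ hε4] with k hk
  have h1 := half_bound hu (hDk k) hD (hσk k) hσ hK s P r δ h hdis hvol
  have h2 := half_bound hu hD (hDk k) hσ (hσk k) hK s P r δ h hdis hvol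
  simp only [abs_sub_comm (σ _)] at h2
  calc volume (sd (Dk k K) (D K)) ≤ volume (Dk k K \ D K) + volume (D K \ Dk k K) :=
        measure_union_le _ _
    _ ≤ (ε / 2 / 2 + ε / 2 / 2) + (ε / 2 / 2 + ε / 2 / 2) :=
        add_le_add (h1.trans (by gcongr)) (h2.trans (by gcongr))
    _ = ε := by rw [ENNReal.add_halves, ENNReal.add_halves]

/-- Lemma 6.3: for a subfamily `𝒥′ ⊂ 𝒥_H(𝒦ⁿₙ)`, a map in `𝒥_H(𝒦ⁿₙ)` is approximable on
the convex bodies by maps in `𝒥′` if and only if it is weakly approximable on the convex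
bodies by maps in `𝒥′`. -/
theorem stmt8 {n : ℕ} (hn : 2 ≤ n) (u : Euc n) (hu : ‖u‖ = 1) (t₀ : ℝ)
    (𝓙' : Set (Set (Euc n) → Set (Euc n))) (h𝓙' : ∀ W ∈ 𝓙', inJH u W)
    (D : Set (Euc n) → Set (Euc n)) (hD : inJH u D) :
    (∃ S : ℕ → Set (Euc n) → Set (Euc n), (∀ k, S k ∈ 𝓙') ∧
        ∀ K : Set (Euc n), isConvexBody K →
          Tendsto (fun k => volume (sd (S k K) (D K))) atTop (𝓝 0)) ↔
    (∀ K : Set (Euc n), isConvexBody K →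
        ∃ S : ℕ → Set (Euc n) → Set (Euc n), (∀ k, S k ∈ 𝓙') ∧
          Tendsto (fun k => volume (sd (S k K) (D K))) atTop (𝓝 0)) := by
  constructor
  · rintro ⟨S, hS, h⟩ K hK
    exact ⟨S, hS, h K hK⟩
  · intro hw
    obtain ⟨σ, hσ⟩ := exists_shift hn hu hD
    have key : ∀ m : ℕ, ∃ W ∈ 𝓙', ∃ τ, isShift u W τ ∧
        ∀ c : ℝ, |c| ≤ (m : ℝ) + 1 → |τ c - σ c| < 1 / ((m : ℝ) + 1) := by
      intro m
      obtain ⟨K, ε, hK, hε, hdet⟩ := detect hn hu (m := (m : ℝ) + 1) (η := 1 / ((m : ℝ) + 1))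
        (by linarith [(Nat.cast_nonneg m : (0 : ℝ) ≤ m)]) (by positivity)
      obtain ⟨S, hS, hlim⟩ := hw K hK
      obtain ⟨k, hk⟩ := (hlim.eventually (gt_mem_nhds hε)).exists
      obtain ⟨τ, hτ⟩ := exists_shift hn hu (h𝓙' _ (hS k))
      exact ⟨S k, hS k, τ, hτ, hdet D (S k) σ τ hD (h𝓙' _ (hS k)) hσ hτ hk⟩
    choose W hW τ hτ hc using key
    refine ⟨W, hW, fun K hK => conv hu (fun k => h𝓙' _ (hW k)) hD hτ hσ (fun c => ?_) hK⟩
    rw [tendsto_iff_norm_sub_tendsto_zero]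
    refine squeeze_zero' (Eventually.of_forall fun k => norm_nonneg _) ?_
      (tendsto_one_div_add_atTop_nhds_zero_nat (𝕜 := ℝ))
    obtain ⟨N, hN⟩ := exists_nat_ge |c|
    filter_upwards [eventually_ge_atTop N] with k hk
    have : (N : ℝ) ≤ k := by exact_mod_cast hk
    exact (hc k c (by linarith)).le
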